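/- Let K be a commutative semiring and let S : Δ* → K be an algebraic formal power series. Then there exists an algebraic system (P_X)_{X∈𝒳} over (Δ ∪ 𝒳) with supp(P_X) ⊆ Δ ∪ Δ(Δ∪𝒳)*Δ for every X ∈ 𝒳, which (being weakly strict) has a unique solution (S_X)_{X∈𝒳}, such that S = S_X for some X ∈ 𝒳. -/

import Mathlib

/-! ### Algebraic formal power series -/

section Algebraic

variable {K Δ : Type} [CommSemiring K]

open Classical in
/-- Given a family of series `(S_X)` and a word `u ∈ (Δ ∪ 𝒳)*`, the series
`u₁ S_{X₁} u₂ ⋯ u_k S_{X_k} u_{k+1}` obtained by substituting `S_X` for each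
variable `X` in `u` and taking Cauchy products. -/
noncomputable def wordSeries {X : Type} (S : X → List Δ → K) :
    List (Δ ⊕ X) → List Δ → K
  | [] => fun w => if w = [] then 1 else 0
  | (Sum.inl a) :: rest => fun w =>
      match w with
      | [] => 0
      | b :: w' => if b = a then wordSeries S rest w' else 0
  | (Sum.inr x) :: rest => fun w =>
      ∑ k ∈ Finset.range (w.length + 1),
        S x (w.take k) * wordSeries S rest (w.drop k)

/-- `(S_X)` is a solution of the algebraic system `(P_X)`. -/
def IsSolution {X : Type} (P : X → List (Δ ⊕ X) → K) (S : X → List Δ → K) : Prop :=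
  ∀ x w, S x w = ∑ᶠ u : List (Δ ⊕ X), P x u * wordSeries S u w

/-- A proper algebraic system: `(P_X, Y) = (P_X, ε) = 0` for all variables `X, Y`. -/
def IsProper {X : Type} (P : X → List (Δ ⊕ X) → K) : Prop :=
  ∀ x, P x [] = 0 ∧ ∀ y : X, P x [Sum.inr y] = 0

/-- `S : Δ* → K` is an algebraic formal power series: a component of the
(unique) quasiregular solution of a proper algebraic system with finitely
supported polynomials. -/
def IsAlgebraicSeries (K Δ : Type) [CommSemiring K] (S : List Δ → K) : Prop :=
  ∃ (X : Type) (_ : Fintype X) (P : X → List (Δ ⊕ X) → K) (Sol : X → List Δ → K),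
    (∀ x, (Function.support (P x)).Finite) ∧
    IsProper P ∧ IsSolution P Sol ∧ (∀ x, Sol x [] = 0) ∧
    ∃ x₀, ∀ w, S w = Sol x₀ w

end Algebraic

/-!
Gather the monomials of a proper system that start with a variable: its quasiregular solution `x`
satisfies `x = r + x Q`, where `Q` is a matrix of quasiregular series and every monomial of `r`
starts with a letter. Hence `x = r + r Q⁺` with `Q⁺ = Q + Q² + ⋯`. Adjoin the entries of `Q⁺` as
further unknowns and use `Q⁺ = Q + Q Q⁺`: once the variables that start a monomial of `Q` are
replaced by their right-hand sides in `r + r Q⁺`, all supports lie in `Δ(Δ ∪ 𝒳)*`. Next gather the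
monomials that end with a variable, `x = r + Q x` with new `r` and `Q`. Then `x = r + Q⁺ r` and
`Q⁺ = Q + Q⁺ Q`, and adjoining the entries of this `Q⁺` in the same way brings all supports into
`Δ ∪ Δ(Δ ∪ 𝒳)*Δ`.

A semiring has no subtraction, so `Q⁺` cannot be handled as `(1 - Q)⁻¹ - 1`. Instead, affine maps
with quasiregular coefficients and right-hand sides of weakly strict systems are contractions for
agreement on short words, which gives existence and uniqueness of their fixed points.
-/

open Finset Function Matrix Submodule

/-- Formal power series in the noncommuting variables `Δ` with coefficients in `K`; the coefficient
of the word `w` in `S` is `S w`. -/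
def FormalSeries (K Δ : Type*) : Type _ := List Δ → K

namespace FormalSeries

@[ext]
theorem ext {K Δ : Type*} {S T : FormalSeries K Δ} (h : ∀ w, S w = T w) : S = T := funext h

section Semiring

variable {K Δ : Type*} [CommSemiring K]

instance : AddCommMonoid (FormalSeries K Δ) := inferInstanceAs (AddCommMonoid (List Δ → K))

instance : Module K (FormalSeries K Δ) := inferInstanceAs (Module K (List Δ → K))

@[simp]
theorem zero_apply (w : List Δ) : (0 : FormalSeries K Δ) w = 0 := rfl

@[simp]
theorem add_apply (S T : FormalSeries K Δ) (w : List Δ) : (S + T) w = S w + T w := rfl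

@[simp]
theorem smul_apply (c : K) (S : FormalSeries K Δ) (w : List Δ) : (c • S) w = c * S w := rfl

instance : One (FormalSeries K Δ) where
  one
    | [] => 1
    | _ :: _ => 0

@[simp]
theorem one_nil : (1 : FormalSeries K Δ) [] = 1 := rfl

@[simp]
theorem one_cons (a : Δ) (w : List Δ) : (1 : FormalSeries K Δ) (a :: w) = 0 := rfl

instance : Mul (FormalSeries K Δ) where
  mul S T w := ∑ k ∈ range (w.length + 1), S (w.take k) * T (w.drop k)

theorem mul_apply (S T : FormalSeries K Δ) (w : List Δ) :
    (S * T) w = ∑ k ∈ range (w.length + 1), S (w.take k) * T (w.drop k) := rfl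

/-- The Brzozowski derivative `a⁻¹S` of a series by a letter. It turns identities between Cauchy
products into inductions on words. -/
def deriv (a : Δ) (S : FormalSeries K Δ) : FormalSeries K Δ := fun w => S (a :: w)

@[simp]
theorem mul_nil (S T : FormalSeries K Δ) : (S * T) [] = S [] * T [] := by
  simp [mul_apply]

theorem mul_cons (S T : FormalSeries K Δ) (a : Δ) (w : List Δ) :
    (S * T) (a :: w) = S [] * T (a :: w) + (deriv a S * T) w := by
  rw [mul_apply, List.length_cons, sum_range_succ', add_comm]
  rfl

instance : NonUnitalNonAssocSemiring (FormalSeries K Δ) where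
  left_distrib S T U := by ext w; simp [mul_apply, mul_add, sum_add_distrib]
  right_distrib S T U := by ext w; simp [mul_apply, add_mul, sum_add_distrib]
  zero_mul S := by ext w; simp [mul_apply]
  mul_zero S := by ext w; simp [mul_apply]

instance : IsScalarTower K (FormalSeries K Δ) (FormalSeries K Δ) where
  smul_assoc c S T := by ext w; simp [mul_apply, mul_sum, mul_assoc]

instance : SMulCommClass K (FormalSeries K Δ) (FormalSeries K Δ) where
  smul_comm c S T := by ext w; simp [mul_apply, mul_sum, mul_left_comm]

theorem deriv_one (a : Δ) : deriv a (1 : FormalSeries K Δ) = 0 := rfl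

theorem deriv_mul (a : Δ) (S T : FormalSeries K Δ) :
    deriv a (S * T) = S [] • deriv a T + deriv a S * T :=
  ext fun w => mul_cons S T a w

protected theorem one_mul (S : FormalSeries K Δ) : 1 * S = S := by
  ext w
  cases w with
  | nil => simp
  | cons a w => simp [mul_cons, deriv_one]

protected theorem mul_one (S : FormalSeries K Δ) : S * 1 = S := by
  ext w
  induction w generalizing S with
  | nil => simp
  | cons a w ih => simp [mul_cons, ih, deriv]

protected theorem mul_assoc (S T U : FormalSeries K Δ) : S * T * U = S * (T * U) := by
  ext w
  induction w generalizing S with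
  | nil => simp [mul_assoc]
  | cons a w ih =>
    simp [mul_cons, deriv_mul, add_mul, smul_mul_assoc, ih, mul_add, mul_assoc, add_assoc]

instance : Semiring (FormalSeries K Δ) where
  one_mul := FormalSeries.one_mul
  mul_one := FormalSeries.mul_one
  mul_assoc := FormalSeries.mul_assoc

instance : Algebra K (FormalSeries K Δ) := Algebra.ofModule smul_mul_assoc mul_smul_comm

open Classical in
/-- The letter `a ∈ Δ` as a formal power series. -/
noncomputable def letter (a : Δ) : FormalSeries K Δ := fun w => if w = [a] then 1 else 0

theorem letter_nil (a : Δ) : (letter a : FormalSeries K Δ) [] = 0 := by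
  simp [letter]

open Classical in
theorem deriv_letter (a b : Δ) :
    deriv b (letter a : FormalSeries K Δ) = if b = a then 1 else 0 := by
  ext w
  by_cases h : b = a <;> cases w <;> simp [deriv, letter, h]

variable (K Δ) in
/-- The quasiregular series: those that vanish on the empty word. -/
def quasiregular : Submodule K (FormalSeries K Δ) where
  carrier := {S | S [] = 0}
  zero_mem' := rfl
  add_mem' {S T} (hS : S [] = 0) (hT : T [] = 0) := by simp [hS, hT]
  smul_mem' c S (hS : S [] = 0) := by simp [hS]

theorem mem_quasiregular {S : FormalSeries K Δ} : S ∈ quasiregular K Δ ↔ S [] = 0 := Iff.rfl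

theorem span_range_le_quasiregular {ι : Type*} {T : ι → FormalSeries K Δ}
    (hT : ∀ i, T i [] = 0) : span K (Set.range T) ≤ quasiregular K Δ :=
  span_le.2 <| Set.range_subset_iff.2 hT

theorem mul_le_quasiregular {M : Submodule K (FormalSeries K Δ)} (hM : M ≤ quasiregular K Δ)
    (N : Submodule K (FormalSeries K Δ)) : M * N ≤ quasiregular K Δ :=
  mul_le.2 fun S hS T _ => by simp [mem_quasiregular, mem_quasiregular.1 (hM hS)]

end Semiring

section FixedPoints

variable {K Δ : Type*} [CommSemiring K]

variable (K Δ) in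
/-- Congruence of series modulo words of length at least `n`: two series are related when their
coefficients agree on all words of length less than `n`. -/
def truncCon (n : ℕ) : RingCon (FormalSeries K Δ) where
  r S T := ∀ w : List Δ, w.length < n → S w = T w
  iseqv :=
    { refl := fun _ _ _ => rfl
      symm := fun h w hw => (h w hw).symm
      trans := fun h h' w hw => (h w hw).trans (h' w hw) }
  add' h h' w hw := congrArg₂ (· + ·) (h w hw) (h' w hw)
  mul' h h' w hw := sum_congr rfl fun k _ =>
    congrArg₂ (· * ·) (h _ (by grind)) (h' _ (by grind))

theorem truncCon_iff {n : ℕ} {S T : FormalSeries K Δ} :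
    truncCon K Δ n S T ↔ ∀ w : List Δ, w.length < n → S w = T w := Iff.rfl

theorem truncCon_quasiregular_mul {n : ℕ} {q S T : FormalSeries K Δ}
    (hq : q ∈ quasiregular K Δ) (h : truncCon K Δ n S T) :
    truncCon K Δ (n + 1) (q * S) (q * T) := by
  rintro (_ | ⟨a, w⟩) hw
  · simp [mem_quasiregular.1 hq]
  · simp only [mul_cons, mem_quasiregular.1 hq, zero_mul, zero_add]
    exact (truncCon K Δ n).mul ((truncCon K Δ n).refl _) h w (by simpa using hw)

theorem truncCon_mul_quasiregular {n : ℕ} {q S T : FormalSeries K Δ}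
    (hq : q ∈ quasiregular K Δ) (h : truncCon K Δ n S T) :
    truncCon K Δ (n + 1) (S * q) (T * q) := by
  intro w hw
  simp only [mul_apply, sum_range_succ, List.drop_length, mem_quasiregular.1 hq, mul_zero, add_zero]
  exact sum_congr rfl fun k hk => congrArg (· * _) (h _ (by grind))

/-- A self-map of families of series is contracting if each application gains one word length of
agreement; this is strict contraction for the ultrametric on series. -/
def IsContracting {ι : Type*} (f : (ι → FormalSeries K Δ) → ι → FormalSeries K Δ) : Prop :=
  ∀ n S T, (∀ i, truncCon K Δ n (S i) (T i)) → ∀ i, truncCon K Δ (n + 1) (f S i) (f T i)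

namespace IsContracting

variable {ι : Type*} {f : (ι → FormalSeries K Δ) → ι → FormalSeries K Δ}

theorem eq_of_isFixedPt (hf : IsContracting f) {S T : ι → FormalSeries K Δ}
    (hS : IsFixedPt f S) (hT : IsFixedPt f T) : S = T := by
  have agree : ∀ n i, truncCon K Δ n (S i) (T i) := by
    intro n
    induction n with
    | zero => simp [truncCon_iff]
    | succ n ih => rw [← hS, ← hT]; exact hf n S T ih
  funext i
  ext w
  exact agree (w.length + 1) i w w.length.lt_succ_self

theorem truncCon_iterate_add (hf : IsContracting f) (S : ι → FormalSeries K Δ) (n d : ℕ) (i : ι) :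
    truncCon K Δ n (f^[n] S i) (f^[n + d] S i) := by
  induction n generalizing i with
  | zero => simp [truncCon_iff]
  | succ n ih =>
    rw [Nat.succ_add, iterate_succ_apply', iterate_succ_apply']
    exact hf n _ _ ih i

theorem exists_isFixedPt (hf : IsContracting f) : ∃ S, IsFixedPt f S := by
  let S : ι → FormalSeries K Δ := fun i w => f^[w.length + 1] 0 i w
  have hS : ∀ n i, truncCon K Δ n (S i) (f^[n] 0 i) := by
    intro n i w hw
    obtain ⟨d, rfl⟩ := Nat.exists_eq_add_of_le hw
    exact hf.truncCon_iterate_add 0 (w.length + 1) d i w w.length.lt_succ_self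
  refine ⟨S, funext fun i => ext fun w => ?_⟩
  calc f S i w = f (f^[w.length] 0) i w := hf _ _ _ (hS w.length) i w w.length.lt_succ_self
    _ = S i w := congrFun (congrFun (iterate_succ_apply' f w.length 0) i).symm w

end IsContracting

end FixedPoints

end FormalSeries

/-- `z` plays the role of `q⁺ = q + q² + q³ + ⋯`: it satisfies both of its defining recursions. -/
structure IsKleenePlus {R : Type*} [Add R] [Mul R] (q z : R) : Prop where
  eq_add_mul_right : z = q + z * q
  eq_add_mul_left : z = q + q * z

namespace FormalSeries

section LinearSystems

variable {K Δ X : Type*} [CommSemiring K] [Fintype X] {Q Z : Matrix X X (FormalSeries K Δ)}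

theorem isContracting_add_vecMul (hQ : ∀ i j, Q i j ∈ quasiregular K Δ)
    (r : X → FormalSeries K Δ) : IsContracting fun x => r + x ᵥ* Q := fun n _ _ h i =>
  (truncCon K Δ (n + 1)).add ((truncCon K Δ (n + 1)).refl _) <|
    (truncCon K Δ (n + 1)).finsetSum _ fun j _ => truncCon_mul_quasiregular (hQ j i) (h j)

theorem isContracting_add_mulVec (hQ : ∀ i j, Q i j ∈ quasiregular K Δ)
    (r : X → FormalSeries K Δ) : IsContracting fun x => r + Q *ᵥ x := fun n _ _ h i =>
  (truncCon K Δ (n + 1)).add ((truncCon K Δ (n + 1)).refl _) <|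
    (truncCon K Δ (n + 1)).finsetSum _ fun j _ => truncCon_quasiregular_mul (hQ i j) (h j)

theorem exists_isKleenePlus (hQ : ∀ i j, Q i j ∈ quasiregular K Δ) : ∃ Z, IsKleenePlus Q Z := by
  choose Z' hZ using fun i => (isContracting_add_vecMul hQ (Q i)).exists_isFixedPt
  let Z : Matrix X X (FormalSeries K Δ) := of Z'
  have hZQ : Q + Z * Q = Z := funext hZ
  -- `Q + QZ` solves the equation `z = Q + zQ` that determines `Z`, hence equals `Z`.
  have hQZ : Q + (Q + Q * Z) * Q = Q + Q * Z := by
    rw [add_mul, mul_assoc, ← mul_add, hZQ]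
  exact ⟨Z, hZQ.symm, funext fun i =>
    (isContracting_add_vecMul hQ (Q i)).eq_of_isFixedPt (hZ i) (congrFun hQZ i)⟩

theorem eq_add_vecMul_of_isKleenePlus (hQ : ∀ i j, Q i j ∈ quasiregular K Δ)
    (hZ : IsKleenePlus Q Z) {x r : X → FormalSeries K Δ} (hx : x = r + x ᵥ* Q) :
    x = r + r ᵥ* Z := by
  refine (isContracting_add_vecMul hQ r).eq_of_isFixedPt hx.symm ?_
  calc r + (r + r ᵥ* Z) ᵥ* Q = r + r ᵥ* (Q + Z * Q) := by
        rw [add_vecMul, vecMul_vecMul, vecMul_add]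
    _ = r + r ᵥ* Z := by rw [← hZ.eq_add_mul_right]

theorem eq_add_mulVec_of_isKleenePlus (hQ : ∀ i j, Q i j ∈ quasiregular K Δ)
    (hZ : IsKleenePlus Q Z) {x r : X → FormalSeries K Δ} (hx : x = r + Q *ᵥ x) :
    x = r + Z *ᵥ r := by
  refine (isContracting_add_mulVec hQ r).eq_of_isFixedPt hx.symm ?_
  calc r + Q *ᵥ (r + Z *ᵥ r) = r + (Q + Q * Z) *ᵥ r := by
        rw [mulVec_add, mulVec_mulVec, add_mulVec]
    _ = r + Z *ᵥ r := by rw [← hZ.eq_add_mul_left]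

end LinearSystems

end FormalSeries

section DotProduct

variable {K A X : Type*} [CommSemiring K] [Semiring A] [Algebra K A] [Fintype X]
  {M N : Submodule K A} {T : X → A} {p : A}

theorem dotProduct_mem_mul {v w : X → A} (hv : ∀ i, v i ∈ M) (hw : ∀ i, w i ∈ N) :
    v ⬝ᵥ w ∈ M * N :=
  sum_mem fun i _ => mul_mem_mul (hv i) (hw i)

theorem exists_dotProduct_of_mem_span_range_mul (hp : p ∈ span K (Set.range T) * N) :
    ∃ q : X → A, (∀ i, q i ∈ N) ∧ p = T ⬝ᵥ q := by
  induction hp using Submodule.mul_induction_on' with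
  | mem_mul_mem m hm n hn =>
    obtain ⟨c, rfl⟩ := (mem_span_range_iff_exists_fun K).1 hm
    exact ⟨fun i => c i • n, fun i => N.smul_mem _ hn, by simp [dotProduct, sum_mul]⟩
  | add p _ p' _ h h' =>
    obtain ⟨q, hq, rfl⟩ := h
    obtain ⟨q', hq', rfl⟩ := h'
    exact ⟨q + q', fun i => N.add_mem (hq i) (hq' i), (dotProduct_add T q q').symm⟩

theorem exists_dotProduct_of_mem_mul_span_range (hp : p ∈ N * span K (Set.range T)) :
    ∃ q : X → A, (∀ i, q i ∈ N) ∧ p = q ⬝ᵥ T := by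
  induction hp using Submodule.mul_induction_on' with
  | mem_mul_mem n hn m hm =>
    obtain ⟨c, rfl⟩ := (mem_span_range_iff_exists_fun K).1 hm
    exact ⟨fun i => c i • n, fun i => N.smul_mem _ hn, by simp [dotProduct, mul_sum]⟩
  | add p _ p' _ h h' =>
    obtain ⟨q, hq, rfl⟩ := h
    obtain ⟨q', hq', rfl⟩ := h'
    exact ⟨q + q', fun i => N.add_mem (hq i) (hq' i), (add_dotProduct q q' T).symm⟩

end DotProduct

section PolynomialForms

variable {K A X Y : Type*} [CommSemiring K] [Semiring A] [Algebra K A] (L : Submodule K A)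

/-- The span of the letters (the submodule `L`) and of the values `T` of the variables. -/
def atoms (T : X → A) : Submodule K A := L ⊔ span K (Set.range T)

/-- The values at `T` of the polynomials over `Δ ∪ 𝒳`, where `L` is the span of the letters. -/
def polynomials (T : X → A) : Submodule K A :=
  Subalgebra.toSubmodule (Algebra.adjoin K (atoms L T : Set A))

/-- The values at `T` of the polynomials supported in `Δ(Δ ∪ 𝒳)*`, where `L` is the span of the
letters. -/
def greibach (T : X → A) : Submodule K A := L * polynomials L T

/-- The values at `T` of the polynomials supported in `Δ ∪ Δ(Δ ∪ 𝒳)*Δ`, where `L` is the span of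
the letters. -/
def doubleGreibach (T : X → A) : Submodule K A := L ⊔ L * polynomials L T * L

variable {L} {T : X → A} {S : Y → A}

theorem atoms_le_polynomials : atoms L T ≤ polynomials L T := Algebra.subset_adjoin

theorem letters_le_polynomials : L ≤ polynomials L T := le_sup_left.trans atoms_le_polynomials

theorem apply_mem_atoms (T : X → A) (i : X) : T i ∈ atoms L T :=
  mem_sup_right (subset_span ⟨i, rfl⟩)

theorem apply_mem_polynomials (T : X → A) (i : X) : T i ∈ polynomials L T :=
  atoms_le_polynomials (apply_mem_atoms T i)

theorem one_le_polynomials : 1 ≤ polynomials L T :=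
  Submodule.one_le.2 (one_mem (Algebra.adjoin K (atoms L T : Set A)))

theorem polynomials_mul_polynomials : polynomials L T * polynomials L T = polynomials L T :=
  Subalgebra.isIdempotentElem_toSubmodule _

theorem mul_le_polynomials {M N : Submodule K A} (hM : M ≤ polynomials L T)
    (hN : N ≤ polynomials L T) : M * N ≤ polynomials L T :=
  (mul_le_mul' hM hN).trans polynomials_mul_polynomials.le

theorem polynomials_le_polynomials (hS : ∀ i, S i ∈ polynomials L T) :
    polynomials L S ≤ polynomials L T :=
  Algebra.adjoin_le <| sup_le letters_le_polynomials <| span_le.2 <| Set.range_subset_iff.2 hS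

theorem polynomials_le_one_sup_mul_atoms :
    polynomials L T ≤ 1 ⊔ polynomials L T * atoms L T := by
  nth_rw 1 [polynomials]
  rw [Algebra.adjoin_eq_span, span_le]
  intro p hp
  induction hp using Submonoid.closure_induction_right with
  | one => exact mem_sup_left (Submodule.one_le.1 le_rfl)
  | mul_right p hp y hy _ =>
    have hp' : p ∈ polynomials L T := by
      rw [polynomials, Algebra.adjoin_eq_span]
      exact subset_span hp
    exact mem_sup_right (mul_mem_mul hp' hy)

theorem greibach_mul_polynomials : greibach L T * polynomials L T = greibach L T := by
  rw [greibach, mul_assoc, polynomials_mul_polynomials]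

theorem greibach_le_greibach (hS : ∀ i, S i ∈ polynomials L T) : greibach L S ≤ greibach L T :=
  mul_le_mul' le_rfl (polynomials_le_polynomials hS)

theorem greibach_le_polynomials : greibach L T ≤ polynomials L T :=
  mul_le_polynomials letters_le_polynomials le_rfl

theorem letters_le_greibach : L ≤ greibach L T :=
  (mul_one L).symm.le.trans (mul_le_mul' le_rfl one_le_polynomials)

theorem doubleGreibach_le_doubleGreibach (hS : ∀ i, S i ∈ polynomials L T) :
    doubleGreibach L S ≤ doubleGreibach L T :=
  sup_le_sup le_rfl (mul_le_mul' (greibach_le_greibach hS) le_rfl)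

theorem greibach_mul_doubleGreibach_le :
    greibach L T * doubleGreibach L T ≤ doubleGreibach L T := by
  rw [doubleGreibach, Submodule.mul_sup]
  refine sup_le le_sup_right (le_sup_of_le_right ?_)
  rw [← mul_assoc]
  exact mul_le_mul' ((mul_le_mul' le_rfl greibach_le_polynomials).trans
    greibach_mul_polynomials.le) le_rfl

theorem greibach_le_doubleGreibach_sup :
    greibach L T ≤ doubleGreibach L T ⊔ greibach L T * span K (Set.range T) :=
  calc greibach L T ≤ L * (1 ⊔ polynomials L T * atoms L T) :=
        mul_le_mul' le_rfl polynomials_le_one_sup_mul_atoms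
    _ = doubleGreibach L T ⊔ greibach L T * span K (Set.range T) := by
        rw [Submodule.mul_sup, mul_one, ← mul_assoc, atoms, Submodule.mul_sup, ← sup_assoc,
          doubleGreibach, greibach]

/-- The unknowns `x`, enlarged by one unknown for each entry of the matrix `Z`. -/
def adjoinEntries (x : X → A) (Z : Matrix X X A) : X ⊕ X × X → A := Sum.elim x (uncurry Z)

theorem apply_mem_polynomials_adjoinEntries (x : X → A) (Z : Matrix X X A) (i : X) :
    x i ∈ polynomials L (adjoinEntries x Z) :=
  apply_mem_polynomials (adjoinEntries x Z) (.inl i)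

theorem entry_mem_polynomials_adjoinEntries (x : X → A) (Z : Matrix X X A) (i j : X) :
    Z i j ∈ polynomials L (adjoinEntries x Z) :=
  apply_mem_polynomials (adjoinEntries x Z) (.inr (i, j))

theorem adjoinEntries_mem {x : X → A} {Z : Matrix X X A} {M : Submodule K A}
    (hx : ∀ i, x i ∈ M) (hZ : ∀ i j, Z i j ∈ M) : ∀ y, adjoinEntries x Z y ∈ M
  | .inl i => hx i
  | .inr (i, j) => hZ i j

variable [Fintype X] {x r : X → A} {Q Z : Matrix X X A} {T : Y → A}

theorem add_vecMul_apply_mem_greibach (hr : ∀ i, r i ∈ greibach L T)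
    (hZ : ∀ i j, Z i j ∈ polynomials L T) (i : X) : (r + r ᵥ* Z) i ∈ greibach L T :=
  add_mem (hr i) <| greibach_mul_polynomials.le <| dotProduct_mem_mul hr fun j => hZ j i

theorem add_mulVec_apply_mem_doubleGreibach (hr : ∀ i, r i ∈ doubleGreibach L T)
    (hZ : ∀ i j, Z i j ∈ greibach L T) (i : X) : (r + Z *ᵥ r) i ∈ doubleGreibach L T :=
  add_mem (hr i) <| greibach_mul_doubleGreibach_le <| dotProduct_mem_mul (hZ i) hr

theorem kleenePlus_apply_mem_greibach (hQZ : IsKleenePlus Q Z)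
    (hQ : ∀ i j, Q i j ∈ greibach L T) (hZ : ∀ i j, Z i j ∈ polynomials L T) (i j : X) :
    Z i j ∈ greibach L T := by
  rw [hQZ.eq_add_mul_left]
  exact add_mem (hQ i j) <| greibach_mul_polynomials.le <|
    dotProduct_mem_mul (hQ i) fun k => hZ k j

theorem kleenePlus_apply_mem_doubleGreibach (hQZ : IsKleenePlus Q Z)
    (hQ : ∀ i j, Q i j ∈ doubleGreibach L T) (hZ : ∀ i j, Z i j ∈ greibach L T) (i j : X) :
    Z i j ∈ doubleGreibach L T := by
  rw [hQZ.eq_add_mul_right]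
  exact add_mem (hQ i j) <| greibach_mul_doubleGreibach_le <|
    dotProduct_mem_mul (hZ i) fun k => hQ k j

theorem adjoinEntries_mem_greibach (hQZ : IsKleenePlus Q Z) (hx : x = r + r ᵥ* Z)
    (hr : ∀ i, r i ∈ greibach L x) (hQ : ∀ i j, Q i j ∈ atoms L x * polynomials L x)
    (y : X ⊕ X × X) : adjoinEntries x Z y ∈ greibach L (adjoinEntries x Z) := by
  have hxT := apply_mem_polynomials_adjoinEntries (L := L) x Z
  have hZT := entry_mem_polynomials_adjoinEntries (L := L) x Z
  have hxG : ∀ i, x i ∈ greibach L (adjoinEntries x Z) := fun i =>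
    congrFun hx i ▸ add_vecMul_apply_mem_greibach (fun i => greibach_le_greibach hxT (hr i)) hZT i
  have hatoms : atoms L x ≤ greibach L (adjoinEntries x Z) :=
    sup_le letters_le_greibach (span_le.2 (Set.range_subset_iff.2 hxG))
  have hQG : atoms L x * polynomials L x ≤ greibach L (adjoinEntries x Z) :=
    (mul_le_mul' hatoms (polynomials_le_polynomials hxT)).trans greibach_mul_polynomials.le
  exact adjoinEntries_mem hxG
    (kleenePlus_apply_mem_greibach hQZ (fun i j => hQG (hQ i j)) hZT) y

theorem adjoinEntries_mem_doubleGreibach (hQZ : IsKleenePlus Q Z) (hx : x = r + Z *ᵥ r)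
    (hr : ∀ i, r i ∈ doubleGreibach L x) (hQ : ∀ i j, Q i j ∈ greibach L x)
    (y : X ⊕ X × X) : adjoinEntries x Z y ∈ doubleGreibach L (adjoinEntries x Z) := by
  have hxT := apply_mem_polynomials_adjoinEntries (L := L) x Z
  have hZT := entry_mem_polynomials_adjoinEntries (L := L) x Z
  have hZG := kleenePlus_apply_mem_greibach hQZ (fun i j => greibach_le_greibach hxT (hQ i j)) hZT
  have hxD : ∀ i, x i ∈ doubleGreibach L (adjoinEntries x Z) := fun i =>
    congrFun hx i ▸ add_mulVec_apply_mem_doubleGreibach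
      (fun i => doubleGreibach_le_doubleGreibach hxT (hr i)) hZG i
  have hvars : greibach L x * span K (Set.range x) ≤ doubleGreibach L (adjoinEntries x Z) :=
    (mul_le_mul' (greibach_le_greibach hxT) (span_le.2 (Set.range_subset_iff.2 hxD))).trans
      greibach_mul_doubleGreibach_le
  have hQD : greibach L x ≤ doubleGreibach L (adjoinEntries x Z) :=
    greibach_le_doubleGreibach_sup.trans (sup_le (doubleGreibach_le_doubleGreibach hxT) hvars)
  exact adjoinEntries_mem hxD
    (kleenePlus_apply_mem_doubleGreibach hQZ (fun i j => hQD (hQ i j)) hZG) y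

end PolynomialForms

namespace FormalSeries

section RecursionElimination

variable {K Δ X : Type*} [CommSemiring K] [Finite X] {L : Submodule K (FormalSeries K Δ)}
  {x : X → FormalSeries K Δ}

theorem exists_adjoinEntries_mem_greibach (hL : L ≤ quasiregular K Δ)
    (hx₀ : ∀ i, x i [] = 0)
    (hx : ∀ i, x i ∈ greibach L x ⊔ span K (Set.range x) * (atoms L x * polynomials L x)) :
    ∃ Z, ∀ y, adjoinEntries x Z y ∈ greibach L (adjoinEntries x Z) := by
  have := Fintype.ofFinite X
  choose r hr p hp hrp using fun i => mem_sup.1 (hx i)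
  choose q hq hpq using fun i => exists_dotProduct_of_mem_span_range_mul (hp i)
  let Q : Matrix X X (FormalSeries K Δ) := fun j i => q i j
  have hQ : ∀ i j, Q i j ∈ quasiregular K Δ := fun i j =>
    mul_le_quasiregular (sup_le hL (span_range_le_quasiregular hx₀)) _ (hq j i)
  have hxQ : x = r + x ᵥ* Q := funext fun i => by
    rw [← hrp i, hpq i]
    rfl
  obtain ⟨Z, hZ⟩ := exists_isKleenePlus hQ
  exact ⟨Z, adjoinEntries_mem_greibach hZ (eq_add_vecMul_of_isKleenePlus hQ hZ hxQ) hr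
    fun i j => hq j i⟩

theorem exists_adjoinEntries_mem_doubleGreibach (hL : L ≤ quasiregular K Δ)
    (hx : ∀ i, x i ∈ greibach L x) :
    ∃ Z, ∀ y, adjoinEntries x Z y ∈ doubleGreibach L (adjoinEntries x Z) := by
  have := Fintype.ofFinite X
  choose r hr p hp hrp using fun i => mem_sup.1 (greibach_le_doubleGreibach_sup (hx i))
  choose Q hQ hpQ using fun i => exists_dotProduct_of_mem_mul_span_range (hp i)
  have hQ₀ : ∀ i j, Q i j ∈ quasiregular K Δ := fun i j => mul_le_quasiregular hL _ (hQ i j)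
  have hxQ : x = r + of Q *ᵥ x := funext fun i => by
    rw [← hrp i, hpQ i]
    rfl
  obtain ⟨Z, hZ⟩ := exists_isKleenePlus hQ₀
  exact ⟨Z, adjoinEntries_mem_doubleGreibach hZ (eq_add_mulVec_of_isKleenePlus hQ₀ hZ hxQ) hr hQ⟩

end RecursionElimination

end FormalSeries

section Words

/-- Words in `Δ ∪ Δ(Δ ∪ 𝒳)*Δ`. -/
def IsDoubleGreibachWord {Δ X : Type*} (u : List (Δ ⊕ X)) : Prop :=
  (∃ a : Δ, u = [Sum.inl a]) ∨
    ∃ (a b : Δ) (v : List (Δ ⊕ X)), u = Sum.inl a :: (v ++ [Sum.inl b])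

theorem IsDoubleGreibachWord.exists_eq_cons {Δ X : Type*} {u : List (Δ ⊕ X)}
    (hu : IsDoubleGreibachWord u) : ∃ a v, u = Sum.inl a :: v := by
  rcases hu with ⟨a, rfl⟩ | ⟨a, b, v, rfl⟩ <;> exact ⟨a, _, rfl⟩

variable {K A Δ X : Type*} [CommSemiring K] [Semiring A] [Algebra K A]

/-- The value of a word over `Δ ∪ 𝒳` when each letter `a` is interpreted as `ℓ a` and each variable
`x` as `T x`. -/
def wordProd (ℓ : Δ → A) (T : X → A) (u : List (Δ ⊕ X)) : A := (u.map (Sum.elim ℓ T)).prod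

variable {ℓ : Δ → A} {T : X → A}

theorem polynomials_eq_span_wordProd :
    polynomials (span K (Set.range ℓ)) T = span K (Set.range (wordProd ℓ T)) := by
  rw [polynomials, atoms, ← span_union, ← Set.Sum.elim_range, Algebra.adjoin_span,
    Algebra.adjoin_eq_span, ← FreeMonoid.mrange_lift, MonoidHom.coe_mrange]
  exact congrArg (span K <| Set.range ·) (funext fun u => FreeMonoid.lift_apply _ _)

theorem wordProd_mem_polynomials (u : List (Δ ⊕ X)) :
    wordProd ℓ T u ∈ polynomials (span K (Set.range ℓ)) T := by
  rw [polynomials_eq_span_wordProd]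
  exact subset_span ⟨u, rfl⟩

theorem apply_elim_mem_atoms (c : Δ ⊕ X) :
    Sum.elim ℓ T c ∈ atoms (span K (Set.range ℓ)) T := by
  rcases c with a | y
  · exact mem_sup_left (subset_span ⟨a, rfl⟩)
  · exact apply_mem_atoms T y

theorem wordProd_mem_of_proper {u : List (Δ ⊕ X)} (hu : u ≠ []) (hu' : ∀ y, u ≠ [Sum.inr y]) :
    wordProd ℓ T u ∈ greibach (span K (Set.range ℓ)) T ⊔ span K (Set.range T) *
      (atoms (span K (Set.range ℓ)) T * polynomials (span K (Set.range ℓ)) T) := by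
  match u with
  | [] => exact absurd rfl hu
  | [Sum.inr y] => exact absurd rfl (hu' y)
  | Sum.inl a :: v =>
    exact mem_sup_left (mul_mem_mul (subset_span ⟨a, rfl⟩) (wordProd_mem_polynomials v))
  | Sum.inr y :: c :: v =>
    exact mem_sup_right (mul_mem_mul (subset_span ⟨y, rfl⟩)
      (mul_mem_mul (apply_elim_mem_atoms c) (wordProd_mem_polynomials v)))

theorem doubleGreibach_le_span_wordProd :
    doubleGreibach (span K (Set.range ℓ)) T ≤
      span K (wordProd ℓ T '' {u | IsDoubleGreibachWord u}) := by
  rw [doubleGreibach, polynomials_eq_span_wordProd, span_mul_span, span_mul_span]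
  refine sup_le (span_mono ?_) (span_mono ?_)
  · rintro _ ⟨a, rfl⟩
    exact ⟨[Sum.inl a], .inl ⟨a, rfl⟩, by simp [wordProd]⟩
  · rintro _ ⟨_, ⟨_, ⟨a, rfl⟩, _, ⟨v, rfl⟩, rfl⟩, _, ⟨b, rfl⟩, rfl⟩
    exact ⟨Sum.inl a :: (v ++ [Sum.inl b]), .inr ⟨a, b, v, rfl⟩, by simp [wordProd, mul_assoc]⟩

end Words

namespace FormalSeries

section AlgebraicSystems

variable {K Δ X : Type*} [CommSemiring K]

/-- The right-hand sides of the algebraic system `P`, evaluated at `S`. -/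
noncomputable def systemMap (P : X → List (Δ ⊕ X) →₀ K) (S : X → FormalSeries K Δ) :
    X → FormalSeries K Δ :=
  fun x => Finsupp.linearCombination K (wordProd letter S) (P x)

theorem isContracting_systemMap {P : X → List (Δ ⊕ X) →₀ K}
    (hP : ∀ x u, P x u ≠ 0 → ∃ a v, u = Sum.inl a :: v) : IsContracting (systemMap P) := by
  intro n S T h x
  refine (truncCon K Δ (n + 1)).finsetSum _ fun u hu => ?_
  obtain ⟨a, v, rfl⟩ := hP x u (Finsupp.mem_support_iff.1 hu)
  refine (truncCon K Δ (n + 1)).toCon.smul _ ?_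
  refine truncCon_quasiregular_mul (letter_nil a) ?_
  refine (truncCon K Δ n).listProd (l := v) fun c _ => ?_
  rcases c with b | y
  · exact (truncCon K Δ n).refl _
  · exact h y

theorem exists_isFixedPt_systemMap {T : X → FormalSeries K Δ}
    (hT : ∀ y, T y ∈ doubleGreibach (span K (Set.range letter)) T) :
    ∃ P : X → List (Δ ⊕ X) →₀ K, (∀ x u, P x u ≠ 0 → IsDoubleGreibachWord u) ∧
      IsFixedPt (systemMap P) T := by
  choose P hP hPT using fun y =>
    (Finsupp.mem_span_image_iff_linearCombination K).1 (doubleGreibach_le_span_wordProd (hT y))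
  exact ⟨P, fun x u hu => hP x (Finsupp.mem_support_iff.2 hu), funext hPT⟩

end AlgebraicSystems

section Solutions

variable {K Δ X : Type} [CommSemiring K] {P : X → List (Δ ⊕ X) →₀ K} {S : X → FormalSeries K Δ}

theorem wordSeries_eq_wordProd (u : List (Δ ⊕ X)) : wordSeries S u = wordProd letter S u := by
  induction u with
  | nil => funext w; cases w <;> simp [wordSeries, wordProd]
  | cons c u ih =>
    rcases c with a | x
    · funext w
      change _ = (letter a * wordProd letter S u : FormalSeries K Δ) w
      cases w with
      | nil => simp [wordSeries, letter_nil]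
      | cons b w =>
        by_cases h : b = a <;> simp [wordSeries, ih, mul_cons, letter_nil, deriv_letter, h]
    · change S x * (show FormalSeries K Δ from wordSeries S u) = S x * wordProd letter S u
      rw [ih]

theorem systemMap_apply (x : X) (w : List Δ) :
    systemMap P S x w = ∑ᶠ u, P x u * wordSeries S u w := by
  rw [finsum_eq_sum_of_support_subset (s := (P x).support)]
  · simp_rw [wordSeries_eq_wordProd]
    exact Finset.sum_apply w _ _
  · intro u hu
    exact Finsupp.mem_support_iff.2 (left_ne_zero_of_mul hu)

theorem isSolution_iff_isFixedPt :
    IsSolution (fun x => P x) S ↔ IsFixedPt (systemMap P) S := by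
  refine ⟨fun h => funext fun x => ext fun w => ?_, fun h x w => ?_⟩
  · rw [systemMap_apply, h x w]
  · rw [← systemMap_apply, h]

theorem apply_mem_of_isProper_of_isSolution (hP : IsProper fun x => P x)
    (hS : IsSolution (fun x => P x) S) (x : X) :
    S x ∈ greibach (span K (Set.range letter)) S ⊔ span K (Set.range S) *
      (atoms (span K (Set.range letter)) S * polynomials (span K (Set.range letter)) S) := by
  rw [← congrFun (isSolution_iff_isFixedPt.1 hS) x]
  refine Submodule.sum_mem _ fun u hu => Submodule.smul_mem _ _ ?_
  rw [Finsupp.mem_support_iff] at hu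
  exact wordProd_mem_of_proper (fun h => hu (h ▸ (hP x).1)) fun y h => hu (h ▸ (hP x).2 y)

end Solutions

end FormalSeries

open FormalSeries

/-- **Corollary (Kuich–Salomaa).** Every algebraic formal power series is a
component of the (unique) solution of an algebraic system all of whose supports
lie in `Δ ∪ Δ(Δ∪𝒳)*Δ` (such a system is weakly strict, hence has a unique
solution). -/
theorem algebraic_normal_form
    (K Δ : Type) [CommSemiring K]
    (S : List Δ → K) (hS : IsAlgebraicSeries K Δ S) :
    ∃ (X : Type) (_ : Fintype X) (P : X → List (Δ ⊕ X) → K)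
      (Sol : X → List Δ → K),
      (∀ x, (Function.support (P x)).Finite) ∧
      (∀ x u, P x u ≠ 0 →
        (∃ a : Δ, u = [Sum.inl a]) ∨
        (∃ (a b : Δ) (v : List (Δ ⊕ X)), u = Sum.inl a :: (v ++ [Sum.inl b]))) ∧
      IsSolution P Sol ∧
      (∀ Sol' : X → List Δ → K, IsSolution P Sol' → Sol' = Sol) ∧
      ∃ x₀, ∀ w, S w = Sol x₀ w := by
  obtain ⟨X, _, P, Sol, hfin, hproper, hsol, hnil, x₀, hx₀⟩ := hS
  lift P to X → List (Δ ⊕ X) →₀ K using hfin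
  have hL : span K (Set.range letter) ≤ quasiregular K Δ := span_range_le_quasiregular letter_nil
  obtain ⟨Z, hZ⟩ := exists_adjoinEntries_mem_greibach hL hnil
    (apply_mem_of_isProper_of_isSolution hproper hsol)
  obtain ⟨W, hW⟩ := exists_adjoinEntries_mem_doubleGreibach hL hZ
  obtain ⟨P', hP', hfix⟩ := exists_isFixedPt_systemMap hW
  have hcontr := isContracting_systemMap fun x u hu => (hP' x u hu).exists_eq_cons
  exact ⟨_, inferInstance, fun x => P' x, _, fun x => (P' x).hasFiniteSupport, hP',
    isSolution_iff_isFixedPt.2 hfix,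
    fun _ hT => hcontr.eq_of_isFixedPt (isSolution_iff_isFixedPt.1 hT) hfix,
    .inl (.inl x₀), hx₀⟩
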